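/- Let p ∈ (0,1/2], r ∈ ℕ with r ≥ 1, and δ > 0. Suppose f : {0,1}^n → {0,1} is an (r,δ)-global Boolean function with μ_p(f) < δ. Then 𝔼_{μ_p}[(f^{≤r})²] ≤ 10^r·δ^{1/3}·μ_p(f). -/

import Mathlib

open Finset

namespace GlobalHC

variable {n : ℕ}

/-- Expectation with respect to the `p`-biased measure on `{0,1}^n`. -/
noncomputable def Ep (p : ℝ) (f : (Fin n → Bool) → ℝ) : ℝ :=
  ∑ x : Fin n → Bool, (∏ i, if x i then p else 1 - p) * f x

/-- The `r`-norm with respect to the `p`-biased measure. -/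
noncomputable def pnorm (p r : ℝ) (f : (Fin n → Bool) → ℝ) : ℝ :=
  (Ep p fun x => |f x| ^ r) ^ (1 / r)

/-- The `p`-biased character `χ_S`. -/
noncomputable def chi (p : ℝ) (S : Finset (Fin n)) (x : Fin n → Bool) : ℝ :=
  ∏ i ∈ S, ((if x i then (1 : ℝ) else 0) - p) / Real.sqrt (p * (1 - p))

/-- The `p`-biased Fourier coefficient `f̂(S)`. -/
noncomputable def coeff (p : ℝ) (f : (Fin n → Bool) → ℝ) (S : Finset (Fin n)) : ℝ :=
  Ep p fun x => f x * chi p S x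

/-- The derivative `D_S f = Σ_{T ⊇ S} f̂(T) χ_{T∖S}`. -/
noncomputable def derivS (p : ℝ) (S : Finset (Fin n)) (f : (Fin n → Bool) → ℝ) :
    (Fin n → Bool) → ℝ :=
  fun x => ∑ T ∈ Finset.univ.filter (fun T => S ⊆ T), coeff p f T * chi p (T \ S) x

/-- The generalised influence `I_S(f) = σ^{-2|S|} Σ_{T ⊇ S} f̂(T)²`. -/
noncomputable def genInf (p : ℝ) (S : Finset (Fin n)) (f : (Fin n → Bool) → ℝ) : ℝ :=
  (∑ T ∈ Finset.univ.filter (fun T => S ⊆ T), coeff p f T ^ 2) / (p * (1 - p)) ^ S.card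

/-- The noise operator `T_ρ f = Σ_S ρ^{|S|} f̂(S) χ_S`. -/
noncomputable def noise (p ρ : ℝ) (f : (Fin n → Bool) → ℝ) : (Fin n → Bool) → ℝ :=
  fun x => ∑ S : Finset (Fin n), ρ ^ S.card * coeff p f S * chi p S x

/-- The degree-`r` truncation `f^{≤ r}`. -/
noncomputable def trunc (p : ℝ) (r : ℕ) (f : (Fin n → Bool) → ℝ) : (Fin n → Bool) → ℝ :=
  fun x => ∑ S ∈ Finset.univ.filter (fun S : Finset (Fin n) => S.card ≤ r),
    coeff p f S * chi p S x

/-- The restriction `f_{J→1}` setting all coordinates in `J` to `1`. -/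
def restrict1 (J : Finset (Fin n)) (f : (Fin n → Bool) → ℝ) : (Fin n → Bool) → ℝ :=
  fun x => f (fun i => if i ∈ J then true else x i)

/-- `f` is `(r,δ)`-global (for the `p`-biased measure). -/
def IsGlobal (p r δ : ℝ) (f : (Fin n → Bool) → ℝ) : Prop :=
  ∀ J : Finset (Fin n), (J.card : ℝ) ≤ r → Ep p (restrict1 J f) ≤ Ep p f + δ

/-- The total influence `I[f] = Σ_i Pr_{μ_p}[f(x ⊕ e_i) ≠ f(x)]`. -/
noncomputable def totalInf (p : ℝ) (f : (Fin n → Bool) → ℝ) : ℝ :=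
  ∑ i : Fin n, Ep p fun x => if f (Function.update x i (!x i)) = f x then 0 else 1

/-- Noise stability `Stab_ρ(f) = Σ_S ρ^{|S|} f̂(S)²` (w.r.t. `μ_p`). -/
noncomputable def stab (p ρ : ℝ) (f : (Fin n → Bool) → ℝ) : ℝ :=
  ∑ S : Finset (Fin n), ρ ^ S.card * coeff p f S ^ 2

/-- `f` is monotone. -/
def Mono (f : (Fin n → Bool) → ℝ) : Prop :=
  ∀ x y : Fin n → Bool, (∀ i, x i ≤ y i) → f x ≤ f y


/-- Shift a set of coordinates by one. -/
def up (T : Finset (Fin n)) : Finset (Fin (n+1)) := T.map (Fin.succEmb n)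

/-- Shift a set of coordinates by one and add the coordinate `0`. -/
def ins (T : Finset (Fin n)) : Finset (Fin (n+1)) := insert 0 (up T)

lemma zero_notMem_up (T : Finset (Fin n)) : (0 : Fin (n+1)) ∉ up T := by
  simp [up, Fin.succ_ne_zero]

lemma succ_mem_up (T : Finset (Fin n)) (i : Fin n) : i.succ ∈ up T ↔ i ∈ T := by
  simp [up]

lemma zero_mem_ins (T : Finset (Fin n)) : (0 : Fin (n+1)) ∈ ins T := by
  simp [ins]

lemma succ_mem_ins (T : Finset (Fin n)) (i : Fin n) : i.succ ∈ ins T ↔ i ∈ T := by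
  simp [ins, succ_mem_up, Fin.succ_ne_zero]

lemma card_up (T : Finset (Fin n)) : (up T).card = T.card := by simp [up]

lemma card_ins (T : Finset (Fin n)) : (ins T).card = T.card + 1 := by
  rw [ins, card_insert_of_notMem (zero_notMem_up T), card_up]

lemma up_sub_up (S T : Finset (Fin n)) : up S ⊆ up T ↔ S ⊆ T := by
  simp [up]

lemma up_sub_ins (S T : Finset (Fin n)) : up S ⊆ ins T ↔ S ⊆ T := by
  rw [ins, subset_insert_iff_of_notMem (zero_notMem_up S), up_sub_up]

lemma ins_sub_ins (S T : Finset (Fin n)) : ins S ⊆ ins T ↔ S ⊆ T := by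
  rw [ins, insert_subset_iff, up_sub_ins]; simp [zero_mem_ins]

lemma ins_sub_up (S T : Finset (Fin n)) : ¬ ins S ⊆ up T :=
  fun h => zero_notMem_up T (h (zero_mem_ins S))

lemma up_or_ins (S : Finset (Fin (n+1))) : ∃ T, S = up T ∨ S = ins T := by
  refine ⟨univ.filter (fun i => i.succ ∈ S), ?_⟩
  by_cases h : (0 : Fin (n+1)) ∈ S
  · right
    ext i
    refine Fin.cases ?_ (fun i => ?_) i
    · simp [h, zero_mem_ins]
    · simp [succ_mem_ins]
  · left
    ext i
    refine Fin.cases ?_ (fun i => ?_) i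
    · simp [h, zero_notMem_up]
    · simp [succ_mem_up]

lemma up_inj : Function.Injective (up (n := n)) := fun _ _ h =>
  Finset.map_injective _ h

lemma ins_inj : Function.Injective (ins (n := n)) := fun S T h => by
  ext i; rw [← succ_mem_ins, h, succ_mem_ins]

lemma sum_split (F : Finset (Fin (n+1)) → ℝ) :
    ∑ S, F S = ∑ T : Finset (Fin n), (F (up T) + F (ins T)) := by
  classical
  have hu : (univ : Finset (Finset (Fin (n+1)))) = univ.image up ∪ univ.image ins := by
    ext S
    obtain ⟨T, h | h⟩ := up_or_ins S <;> simp [h]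
  have hd : Disjoint (univ.image (up (n := n))) (univ.image ins) := by
    rw [Finset.disjoint_left]
    intro S h1 h2
    simp only [mem_image, mem_univ, true_and] at h1 h2
    obtain ⟨T, rfl⟩ := h1
    obtain ⟨T', h⟩ := h2
    exact zero_notMem_up T (h ▸ zero_mem_ins T')
  rw [hu, sum_union hd, sum_image (fun _ _ _ _ h => up_inj h),
    sum_image (fun _ _ _ _ h => ins_inj h), sum_add_distrib]

lemma Ep_succ (p : ℝ) (F : (Fin (n+1) → Bool) → ℝ) :
    Ep p F = Ep p (fun x : Fin n → Bool =>
      p * F (Fin.cons true x) + (1 - p) * F (Fin.cons false x)) := by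
  unfold Ep
  rw [← (Fin.consEquiv (fun _ : Fin (n+1) => Bool)).sum_comp, Fintype.sum_prod_type,
    Fintype.sum_bool, ← sum_add_distrib]
  refine sum_congr rfl fun x _ => ?_
  simp [Fin.prod_univ_succ, Fin.consEquiv]
  ring

lemma Ep_add (p : ℝ) (F G : (Fin n → Bool) → ℝ) :
    Ep p (fun x => F x + G x) = Ep p F + Ep p G := by
  simp [Ep, mul_add, sum_add_distrib]

lemma Ep_mul (p c : ℝ) (F : (Fin n → Bool) → ℝ) :
    Ep p (fun x => c * F x) = c * Ep p F := by
  unfold Ep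
  rw [mul_sum]
  exact sum_congr rfl fun x _ => by ring

lemma wt_nonneg {p : ℝ} (hp : 0 < p) (hp' : p ≤ 1/2) (x : Fin n → Bool) :
    0 ≤ ∏ i, (if x i then p else 1 - p) := by
  refine prod_nonneg fun i _ => ?_
  split_ifs <;> linarith

lemma Ep_mono {p : ℝ} (hp : 0 < p) (hp' : p ≤ 1/2) {F G : (Fin n → Bool) → ℝ}
    (h : ∀ x, F x ≤ G x) : Ep p F ≤ Ep p G :=
  sum_le_sum fun x _ => mul_le_mul_of_nonneg_left (h x) (wt_nonneg hp hp' x)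

lemma Ep_sum {ι : Type*} (p : ℝ) (s : Finset ι) (F : ι → (Fin n → Bool) → ℝ) :
    Ep p (fun x => ∑ i ∈ s, F i x) = ∑ i ∈ s, Ep p (F i) := by
  unfold Ep
  simp_rw [mul_sum]
  exact sum_comm

lemma Ep_cs {p : ℝ} (hp : 0 < p) (hp' : p ≤ 1/2) (F G : (Fin n → Bool) → ℝ) :
    Ep p (fun x => F x * G x) ^ 2 ≤ Ep p (fun x => F x ^ 2) * Ep p (fun x => G x ^ 2) := by
  unfold Ep
  refine sum_sq_le_sum_mul_sum_of_sq_le_mul _ (fun x _ => ?_) (fun x _ => ?_) (fun x _ => ?_)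
  · exact mul_nonneg (wt_nonneg hp hp' x) (sq_nonneg _)
  · exact mul_nonneg (wt_nonneg hp hp' x) (sq_nonneg _)
  · exact le_of_eq (by ring)

lemma sum_zero' (F : Finset (Fin 0) → ℝ) : ∑ T, F T = F ∅ := by
  rw [Fintype.sum_unique]; rfl

lemma Ep_zero' (p : ℝ) (F : (Fin 0 → Bool) → ℝ) : Ep p F = F default := by
  unfold Ep
  rw [Fintype.sum_unique, Fin.prod_univ_zero, one_mul]
  exact congrArg F (Subsingleton.elim _ _)

lemma chi_empty (p : ℝ) (x : Fin n → Bool) : chi p ∅ x = 1 := by simp [chi]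

lemma chi_up (p : ℝ) (T : Finset (Fin n)) (b : Bool) (x : Fin n → Bool) :
    chi p (up T) (Fin.cons b x) = chi p T x := by
  simp [chi, up]

lemma chi_ins (p : ℝ) (T : Finset (Fin n)) (b : Bool) (x : Fin n → Bool) :
    chi p (ins T) (Fin.cons b x) =
      ((if b then (1 : ℝ) else 0) - p) / Real.sqrt (p * (1 - p)) * chi p T x := by
  rw [← chi_up p T b x, chi, ins, prod_insert (zero_notMem_up T)]
  simp [chi]

/-- The polynomial with coefficients `c`. -/
noncomputable def poly (p : ℝ) (c : Finset (Fin n) → ℝ) (x : Fin n → Bool) : ℝ :=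
  ∑ T, c T * chi p T x

lemma poly_cons (p : ℝ) (c : Finset (Fin (n+1)) → ℝ) (b : Bool) (x : Fin n → Bool) :
    poly p c (Fin.cons b x) = poly p (fun T => c (up T)) x +
      ((if b then (1 : ℝ) else 0) - p) *
        (poly p (fun T => c (ins T)) x / Real.sqrt (p * (1 - p))) := by
  unfold poly
  rw [sum_split, sum_add_distrib, sum_div, mul_sum]
  simp_rw [chi_up, chi_ins]
  congr 1
  exact sum_congr rfl fun T _ => by ring

lemma parseval {p : ℝ} (hp : 0 < p) (hp' : p ≤ 1/2) :
    ∀ {n : ℕ} (c : Finset (Fin n) → ℝ), Ep p (fun x => poly p c x ^ 2) = ∑ T, c T ^ 2 := by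
  intro n
  induction n with
  | zero =>
    intro c
    rw [Ep_zero', sum_zero', poly, sum_zero', chi_empty, mul_one]
  | succ n ih =>
    intro c
    have hs : Real.sqrt (p * (1 - p)) ^ 2 = p * (1 - p) := Real.sq_sqrt (by nlinarith)
    have hs0 : 0 < Real.sqrt (p * (1 - p)) := Real.sqrt_pos.2 (by nlinarith)
    rw [Ep_succ, sum_split, sum_add_distrib, ← ih, ← ih, ← Ep_add]
    congr 1
    ext x
    rw [poly_cons, poly_cons]
    set A := poly p (fun T => c (up T)) x
    set B := poly p (fun T => c (ins T)) x
    set s := Real.sqrt (p * (1 - p))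
    obtain ⟨β, hβ⟩ : ∃ β, B / s = β := ⟨_, rfl⟩
    have hB : B = s * β := by rw [← hβ]; field_simp
    rw [hβ, hB, mul_pow, hs]
    simp
    ring

/-- Weighted upper sums of squared coefficients. -/
noncomputable def Phi (c : Finset (Fin n) → ℝ) (S : Finset (Fin n)) : ℝ :=
  ∑ T, if S ⊆ T then 4 ^ T.card * c T ^ 2 else 0

lemma Phi_up (c : Finset (Fin (n+1)) → ℝ) (S : Finset (Fin n)) :
    Phi c (up S) = Phi (fun T => c (up T)) S + 4 * Phi (fun T => c (ins T)) S := by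
  unfold Phi
  rw [sum_split, sum_add_distrib, mul_sum]
  simp_rw [up_sub_up, up_sub_ins, card_up, card_ins]
  congr 1
  refine sum_congr rfl fun T _ => ?_
  split_ifs <;> ring

lemma Phi_ins (c : Finset (Fin (n+1)) → ℝ) (S : Finset (Fin n)) :
    Phi c (ins S) = 4 * Phi (fun T => c (ins T)) S := by
  unfold Phi
  rw [sum_split, mul_sum]
  simp_rw [ins_sub_ins, ins_sub_up, card_ins, if_false, zero_add]
  refine sum_congr rfl fun T _ => ?_
  split_ifs <;> ring

lemma Phi_nonneg (c : Finset (Fin n) → ℝ) (S : Finset (Fin n)) : 0 ≤ Phi c S :=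
  sum_nonneg fun T _ => by split_ifs <;> positivity

lemma pointwise {p : ℝ} (hp : 0 < p) (hp' : p ≤ 1/2) (a b c d : ℝ) :
    p * ((a + (1 - p) * b) ^ 2 * (c + (1 - p) * d) ^ 2) +
      (1 - p) * ((a + (0 - p) * b) ^ 2 * (c + (0 - p) * d) ^ 2) ≤
    a ^ 2 * c ^ 2 + 4 * (p * (1 - p)) * (a ^ 2 * d ^ 2) + 4 * (p * (1 - p)) * (b ^ 2 * c ^ 2)
      + 3 * (p * (1 - p)) * (b ^ 2 * d ^ 2) := by
  have hq : 0 < p * (1 - p) := by nlinarith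
  have h : 0 ≤ p * (1 - p) * (2 * (a * d - b * c) ^ 2 + (a * d - (1 - 2 * p) * (b * d)) ^ 2
    + (b * c - (1 - 2 * p) * (b * d)) ^ 2 + 11 * (p * (1 - p)) * (b * d) ^ 2) := by positivity
  linarith

lemma hyper {p : ℝ} (hp : 0 < p) (hp' : p ≤ 1/2) :
    ∀ {n : ℕ} (c d : Finset (Fin n) → ℝ),
      Ep p (fun x => poly p c x ^ 2 * poly p d x ^ 2) ≤
        ∑ S, (3 / (16 * (p * (1 - p)))) ^ S.card * (Phi c S * Phi d S) := by
  intro n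
  have hq : 0 < p * (1 - p) := by nlinarith
  induction n with
  | zero =>
    intro c d
    rw [Ep_zero', sum_zero', poly, sum_zero', poly, sum_zero', Phi, sum_zero', Phi, sum_zero',
      chi_empty]
    simp only [mul_one, card_empty, pow_zero, one_mul, Subset.refl, if_true, le_refl]
  | succ n ih =>
    intro c d
    have hs : Real.sqrt (p * (1 - p)) ^ 2 = p * (1 - p) := Real.sq_sqrt (by nlinarith)
    have hs0 : 0 < Real.sqrt (p * (1 - p)) := Real.sqrt_pos.2 (by nlinarith)
    set cu := fun T : Finset (Fin n) => c (up T) with hcu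
    set ci := fun T : Finset (Fin n) => c (ins T) with hci
    set du := fun T : Finset (Fin n) => d (up T) with hdu
    set di := fun T : Finset (Fin n) => d (ins T) with hdi
    have step : Ep p (fun x => poly p c x ^ 2 * poly p d x ^ 2) ≤
        Ep p (fun x => poly p cu x ^ 2 * poly p du x ^ 2)
        + 4 * Ep p (fun x => poly p cu x ^ 2 * poly p di x ^ 2)
        + 4 * Ep p (fun x => poly p ci x ^ 2 * poly p du x ^ 2)
        + 3 / (p * (1 - p)) * Ep p (fun x => poly p ci x ^ 2 * poly p di x ^ 2) := by
      rw [← Ep_mul, ← Ep_mul, ← Ep_mul, ← Ep_add, ← Ep_add, ← Ep_add, Ep_succ]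
      refine Ep_mono hp hp' fun x => ?_
      rw [poly_cons, poly_cons, poly_cons, poly_cons]
      simp only [← hcu, ← hci, ← hdu, ← hdi]
      generalize poly p cu x = a
      generalize poly p ci x = b
      generalize poly p du x = a'
      generalize poly p di x = b'
      set s := Real.sqrt (p * (1 - p))
      obtain ⟨β, hβ⟩ : ∃ β, b / s = β := ⟨_, rfl⟩
      have hB : b = s * β := by rw [← hβ]; field_simp
      obtain ⟨β', hβ'⟩ : ∃ β, b' / s = β := ⟨_, rfl⟩
      have hB' : b' = s * β' := by rw [← hβ']; field_simp
      rw [hβ, hβ', hB, hB', mul_pow, mul_pow, hs]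
      have := pointwise hp hp' a β a' β'
      have e : 3 / (p * (1 - p)) * (p * (1 - p) * β ^ 2 * (p * (1 - p) * β' ^ 2))
        = 3 * (p * (1 - p)) * (β ^ 2 * β' ^ 2) := by field_simp
      rw [e]
      simp only [if_true, Bool.false_eq_true, if_false]
      linarith
    have h1 := ih cu du
    have h2 := ih cu di
    have h3 := ih ci du
    have h4 := mul_le_mul_of_nonneg_left (ih ci di) (by positivity : 0 ≤ 3 / (p * (1 - p)))
    have key : (∑ S, (3 / (16 * (p * (1 - p)))) ^ S.card * (Phi c S * Phi d S)) =
        (∑ S, (3 / (16 * (p * (1 - p)))) ^ S.card * (Phi cu S * Phi du S))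
        + 4 * (∑ S, (3 / (16 * (p * (1 - p)))) ^ S.card * (Phi cu S * Phi di S))
        + 4 * (∑ S, (3 / (16 * (p * (1 - p)))) ^ S.card * (Phi ci S * Phi du S))
        + 3 / (p * (1 - p)) * (∑ S, (3 / (16 * (p * (1 - p)))) ^ S.card * (Phi ci S * Phi di S))
        + 16 * (∑ S, (3 / (16 * (p * (1 - p)))) ^ S.card * (Phi ci S * Phi di S)) := by
      rw [sum_split]
      simp only [mul_sum, ← sum_add_distrib]
      refine sum_congr rfl fun S _ => ?_
      rw [Phi_up, Phi_up, Phi_ins, Phi_ins, card_up, card_ins, pow_succ]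
      simp only [← hcu, ← hci, ← hdu, ← hdi]
      have e : 3 / (p * (1 - p)) = 16 * (3 / (16 * (p * (1 - p)))) := by field_simp
      rw [e]
      ring
    have h5 : 0 ≤ ∑ S, (3 / (16 * (p * (1 - p)))) ^ S.card * (Phi ci S * Phi di S) :=
      sum_nonneg fun S _ => mul_nonneg (by positivity)
        (mul_nonneg (Phi_nonneg _ _) (Phi_nonneg _ _))
    rw [key]
    linarith

lemma coeff_up (p : ℝ) (f : (Fin (n+1) → Bool) → ℝ) (T : Finset (Fin n)) :
    coeff p f (up T) =
      coeff p (fun x => p * f (Fin.cons true x) + (1 - p) * f (Fin.cons false x)) T := by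
  unfold coeff
  rw [Ep_succ]
  congr 1
  ext x
  rw [chi_up, chi_up]
  ring

lemma coeff_ins {p : ℝ} (hp : 0 < p) (hp' : p ≤ 1/2) (f : (Fin (n+1) → Bool) → ℝ)
    (T : Finset (Fin n)) :
    coeff p f (ins T) =
      coeff p (fun x => Real.sqrt (p * (1 - p)) *
        (f (Fin.cons true x) - f (Fin.cons false x))) T := by
  have hs : Real.sqrt (p * (1 - p)) ^ 2 = p * (1 - p) := Real.sq_sqrt (by nlinarith)
  have hs0 : 0 < Real.sqrt (p * (1 - p)) := Real.sqrt_pos.2 (by nlinarith)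
  unfold coeff
  rw [Ep_succ]
  congr 1
  ext x
  rw [chi_ins, chi_ins]
  simp only [if_true, Bool.false_eq_true, if_false]
  set s := Real.sqrt (p * (1 - p))
  field_simp
  rw [hs]
  ring

lemma restrict1_up (J : Finset (Fin n)) (f : (Fin (n+1) → Bool) → ℝ) (b : Bool)
    (x : Fin n → Bool) :
    restrict1 (up J) f (Fin.cons b x) = restrict1 J (fun y => f (Fin.cons b y)) x := by
  unfold restrict1
  congr 1
  ext i
  refine Fin.cases ?_ (fun i => ?_) i
  · simp [zero_notMem_up]
  · simp [succ_mem_up]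

lemma restrict1_ins (J : Finset (Fin n)) (f : (Fin (n+1) → Bool) → ℝ) (b : Bool)
    (x : Fin n → Bool) :
    restrict1 (ins J) f (Fin.cons b x) = restrict1 J (fun y => f (Fin.cons true y)) x := by
  unfold restrict1
  congr 1
  ext i
  refine Fin.cases ?_ (fun i => ?_) i
  · simp [zero_mem_ins]
  · simp [succ_mem_ins]

lemma influence {p : ℝ} (hp : 0 < p) (hp' : p ≤ 1/2) :
    ∀ {n : ℕ} (f : (Fin n → Bool) → ℝ) (S : Finset (Fin n)),
      (∑ T, if S ⊆ T then coeff p f T ^ 2 else 0) ≤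
        (4 * (p * (1 - p))) ^ S.card *
          ∑ J, if J ⊆ S then Ep p (fun x => restrict1 J f x ^ 2) else 0 := by
  intro n
  have hq : 0 < p * (1 - p) := by nlinarith
  have hs : Real.sqrt (p * (1 - p)) ^ 2 = p * (1 - p) := Real.sq_sqrt hq.le
  induction n with
  | zero =>
    intro f S
    have hS : S = ∅ := Subsingleton.elim _ _
    subst hS
    rw [sum_zero', sum_zero', Ep_zero', coeff, Ep_zero', chi_empty]
    simp only [mul_one, card_empty, pow_zero, one_mul, Subset.refl, if_true]
    rw [restrict1]
    exact le_of_eq (congrArg (fun y => f y ^ 2) (Subsingleton.elim _ _))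
  | succ n ih =>
    intro f S
    obtain ⟨S, rfl | rfl⟩ := up_or_ins S
    · rw [sum_split, sum_split]
      simp_rw [up_sub_up, up_sub_ins, ins_sub_up, card_up, coeff_up, coeff_ins hp hp', if_false, add_zero]
      rw [sum_add_distrib]
      refine (add_le_add (ih _ _) (ih _ _)).trans (le_of_eq ?_)
      rw [← mul_add, ← sum_add_distrib]
      congr 1
      refine sum_congr rfl fun J _ => ?_
      split_ifs
      · rw [← Ep_add, Ep_succ]
        congr 1
        ext x
        rw [restrict1_up, restrict1_up]
        simp only [restrict1, mul_pow, hs]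
        ring
      · simp
    · rw [sum_split, sum_split]
      simp_rw [ins_sub_ins, up_sub_ins, ins_sub_up, card_ins, coeff_ins hp hp']
      simp only [if_false, zero_add]
      refine (ih _ _).trans ?_
      rw [pow_succ, mul_assoc]
      refine mul_le_mul_of_nonneg_left ?_ (by positivity)
      rw [mul_sum]
      refine sum_le_sum fun J _ => ?_
      split_ifs
      · rw [← Ep_add, ← Ep_mul, Ep_succ]
        refine Ep_mono hp hp' fun x => ?_
        rw [restrict1_up, restrict1_up, restrict1_ins, restrict1_ins]
        simp only [restrict1, mul_pow, hs]
        generalize f _ = u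
        generalize f _ = v
        have h1 : (u - v) ^ 2 ≤ 4 * (p * u ^ 2 + (1 - p) * v ^ 2 + u ^ 2) := by
          nlinarith [sq_nonneg (u + v), sq_nonneg u, sq_nonneg v,
            mul_nonneg hp.le (sq_nonneg u), mul_nonneg (by linarith : 0 ≤ 1/2 - p) (sq_nonneg v)]
        have := mul_le_mul_of_nonneg_left h1 hq.le
        linarith
      · simp
/-- low-degree concentration for sparse global Boolean functions. -/
theorem statement9 {n : ℕ} (p δ : ℝ) (r : ℕ) (hp : 0 < p) (hp' : p ≤ 1/2)
    (hr : 1 ≤ r) (hδ : 0 < δ)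
    (f : (Fin n → Bool) → ℝ) (hbool : ∀ x, f x = 0 ∨ f x = 1)
    (hglob : IsGlobal p (r : ℝ) δ f) (hmeas : Ep p f < δ) :
    Ep p (fun x => trunc p r f x ^ 2) ≤ (10 : ℝ) ^ r * δ ^ ((1 : ℝ)/3) * Ep p f := by
  have hq : 0 < p * (1 - p) := by nlinarith
  set c : Finset (Fin n) → ℝ := fun T => if T.card ≤ r then coeff p f T else 0 with hc
  set W := ∑ T, c T ^ 2 with hW
  have htr : trunc p r f = poly p c := by
    ext x
    unfold trunc poly
    rw [sum_filter]
    refine sum_congr rfl fun T _ => ?_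
    simp only [hc]
    split_ifs <;> simp
  have hff : ∀ x, f x ^ 2 = f x := fun x => by
    rcases hbool x with h | h <;> simp [h]
  have hW0 : 0 ≤ W := sum_nonneg fun T _ => sq_nonneg _
  have hμ0 : 0 ≤ Ep p f := by
    have : Ep p f = Ep p (fun x => f x ^ 2) := by simp_rw [hff]
    rw [this]
    exact sum_nonneg fun x _ => mul_nonneg (wt_nonneg hp hp' x) (sq_nonneg _)
  have hfg : Ep p (fun x => f x * poly p c x) = W := by
    unfold poly
    simp_rw [mul_sum]
    rw [Ep_sum]
    refine sum_congr rfl fun T _ => ?_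
    have : (fun x => f x * (c T * chi p T x)) = fun x => c T * (f x * chi p T x) := by
      ext x; ring
    rw [this, Ep_mul]
    change c T * coeff p f T = _
    simp only [hc]
    split_ifs
    · ring
    · simp
  -- two applications of Cauchy Schwarz
  set E4 := Ep p (fun x => poly p c x ^ 2 * poly p c x ^ 2) with hE4
  have cs1 : W ^ 2 ≤ Ep p f * Ep p (fun x => f x * poly p c x ^ 2) := by
    have h := Ep_cs hp hp' f (fun x => f x * poly p c x)
    simp only [← mul_assoc, ← sq, mul_pow, hff] at h
    rwa [hfg] at h
  have cs2 : Ep p (fun x => f x * poly p c x ^ 2) ^ 2 ≤ Ep p f * E4 := by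
    have h := Ep_cs hp hp' f (fun x => poly p c x ^ 2)
    simp only [hff] at h
    simp only [sq (poly p c _ ^ 2)] at h
    exact h
  have hold : W ^ 4 ≤ Ep p f ^ 3 * E4 := by
    calc W ^ 4 = (W ^ 2) ^ 2 := by ring
      _ ≤ (Ep p f * Ep p (fun x => f x * poly p c x ^ 2)) ^ 2 :=
        pow_le_pow_left₀ (sq_nonneg _) cs1 2
      _ = Ep p f ^ 2 * Ep p (fun x => f x * poly p c x ^ 2) ^ 2 := by ring
      _ ≤ Ep p f ^ 2 * (Ep p f * E4) := mul_le_mul_of_nonneg_left cs2 (sq_nonneg _)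
      _ = _ := by ring
  -- influences
  have hPhi : ∀ S : Finset (Fin n),
      Phi c S ≤ 4 ^ r * ((8 * (p * (1 - p))) ^ S.card * (2 * δ)) := by
    intro S
    by_cases hS : S.card ≤ r
    · have h1 : Phi c S ≤ 4 ^ r * ∑ T, if S ⊆ T then coeff p f T ^ 2 else 0 := by
        unfold Phi
        rw [mul_sum]
        refine sum_le_sum fun T _ => ?_
        split_ifs
        · simp only [hc]
          split_ifs with h
          · exact mul_le_mul_of_nonneg_right (pow_le_pow_right₀ (by norm_num) h) (sq_nonneg _)
          · simp only [ne_eq, OfNat.ofNat_ne_zero, not_false_eq_true, zero_pow, mul_zero]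
            positivity
        · simp
      refine h1.trans (mul_le_mul_of_nonneg_left ?_ (by positivity))
      refine (influence hp hp' f S).trans ?_
      have h2 : (∑ J, if J ⊆ S then Ep p (fun x => restrict1 J f x ^ 2) else 0) ≤
          2 ^ S.card * (2 * δ) := by
        rw [← sum_filter]
        have hpw : univ.filter (fun J => J ⊆ S) = S.powerset := by ext J; simp
        rw [hpw]
        have : ∀ J ∈ S.powerset, Ep p (fun x => restrict1 J f x ^ 2) ≤ 2 * δ := by
          intro J hJ
          have hJr : (J.card : ℝ) ≤ r := by
            exact_mod_cast (card_le_card (mem_powerset.1 hJ)).trans hS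
          have h3 := hglob J hJr
          have h4 : (fun x => restrict1 J f x ^ 2) = restrict1 J f := by
            ext x; exact hff _
          rw [h4]
          linarith
        refine (sum_le_card_nsmul _ _ _ this).trans (le_of_eq ?_)
        rw [card_powerset, nsmul_eq_mul]
        push_cast
        ring
      calc _ ≤ (4 * (p * (1 - p))) ^ S.card * (2 ^ S.card * (2 * δ)) :=
            mul_le_mul_of_nonneg_left h2 (by positivity)
        _ = (8 * (p * (1 - p))) ^ S.card * (2 * δ) := by
            rw [← mul_assoc, ← mul_pow]
            congr 2
            ring
    · have : Phi c S = 0 := by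
        unfold Phi
        refine sum_eq_zero fun T _ => ?_
        split_ifs with h
        · have : ¬ T.card ≤ r := fun h' => hS ((card_le_card h).trans h')
          simp [hc, this]
        · rfl
      rw [this]
      positivity
  have hE : E4 ≤ 2 * δ * 40 ^ r * W := by
    have h1 : E4 ≤ 4 ^ r * (2 * δ) * ∑ S, (3 / 2 : ℝ) ^ S.card * Phi c S := by
      refine (hyper hp hp' c c).trans ?_
      rw [mul_sum]
      refine sum_le_sum fun S _ => ?_
      calc _ ≤ (3 / (16 * (p * (1 - p)))) ^ S.card *
            (4 ^ r * ((8 * (p * (1 - p))) ^ S.card * (2 * δ)) * Phi c S) := by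
            refine mul_le_mul_of_nonneg_left ?_ (by positivity)
            exact mul_le_mul_of_nonneg_right (hPhi S) (Phi_nonneg _ _)
        _ = 4 ^ r * (2 * δ) * (((3 / (16 * (p * (1 - p)))) * (8 * (p * (1 - p)))) ^ S.card
              * Phi c S) := by
            rw [mul_pow (3 / (16 * (p * (1 - p)))) (8 * (p * (1 - p)))]
            generalize (3 / (16 * (p * (1 - p)))) ^ S.card = y
            generalize (8 * (p * (1 - p))) ^ S.card = z
            ring
        _ = _ := by
            congr 3
            have : p * (1 - p) ≠ 0 := hq.ne'
            generalize p * (1 - p) = z at this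
            field_simp
            norm_num
    have h2 : ∑ S, (3 / 2 : ℝ) ^ S.card * Phi c S = ∑ T, (10 : ℝ) ^ T.card * c T ^ 2 := by
      unfold Phi
      simp_rw [mul_sum]
      rw [sum_comm]
      refine sum_congr rfl fun T _ => ?_
      have hpw : univ.filter (fun J => J ⊆ T) = T.powerset := by ext J; simp
      simp_rw [mul_ite, mul_zero]
      rw [← sum_filter, hpw, ← sum_mul]
      have h3 := sum_pow_mul_eq_add_pow (3 / 2 : ℝ) 1 T
      simp only [one_pow, mul_one] at h3
      rw [h3, ← mul_assoc, ← mul_pow]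
      norm_num
    have h3 : ∑ T, (10 : ℝ) ^ T.card * c T ^ 2 ≤ 10 ^ r * W := by
      rw [hW, mul_sum]
      refine sum_le_sum fun T _ => ?_
      simp only [hc]
      split_ifs with h
      · exact mul_le_mul_of_nonneg_right (pow_le_pow_right₀ (by norm_num) h) (sq_nonneg _)
      · simp
    rw [h2] at h1
    refine h1.trans ((mul_le_mul_of_nonneg_left h3 (by positivity)).trans (le_of_eq ?_))
    have : (40 : ℝ) ^ r = 4 ^ r * 10 ^ r := by rw [← mul_pow]; norm_num
    rw [this]
    ring
  -- conclusion
  rw [htr, parseval hp hp']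
  change W ≤ _
  set D := δ ^ ((1 : ℝ)/3) with hD
  have hD0 : 0 ≤ D := Real.rpow_nonneg hδ.le _
  have hD3 : D ^ 3 = δ := by
    rw [hD, ← Real.rpow_natCast, ← Real.rpow_mul hδ.le]
    norm_num
  rcases hW0.eq_or_lt with h0 | hWpos
  · rw [← h0]; positivity
  have hW3 : W ^ 3 ≤ Ep p f ^ 3 * (2 * δ * 40 ^ r) := by
    have h1 : W ^ 4 ≤ Ep p f ^ 3 * (2 * δ * 40 ^ r * W) :=
      hold.trans (mul_le_mul_of_nonneg_left hE (by positivity))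
    refine le_of_mul_le_mul_right ?_ hWpos
    linarith
  have hpow : (2 : ℝ) * 40 ^ r ≤ 1000 ^ r := by
    have h1 : (2 : ℝ) ≤ 25 ^ r := by
      calc (2 : ℝ) ≤ 25 ^ 1 := by norm_num
        _ ≤ 25 ^ r := pow_le_pow_right₀ (by norm_num) hr
    have h2 : (1000 : ℝ) ^ r = 25 ^ r * 40 ^ r := by rw [← mul_pow]; norm_num
    rw [h2]
    exact mul_le_mul_of_nonneg_right h1 (by positivity)
  refine le_of_pow_le_pow_left₀ (n := 3) (by norm_num) (by positivity) ?_
  calc W ^ 3 ≤ Ep p f ^ 3 * (2 * δ * 40 ^ r) := hW3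
    _ = (Ep p f ^ 3 * δ) * (2 * 40 ^ r) := by ring
    _ ≤ (Ep p f ^ 3 * δ) * 1000 ^ r := mul_le_mul_of_nonneg_left hpow (by positivity)
    _ = (10 ^ r * D * Ep p f) ^ 3 := by
      have : (1000 : ℝ) ^ r = (10 ^ r) ^ 3 := by rw [← pow_mul, mul_comm, pow_mul]; norm_num
      rw [this, ← hD3]
      ring

end GlobalHC
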